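/- Let V be an irreducible integrable 𝔏(A)-module with finite-dimensional weight spaces on which the affine center K⊗1 acts trivially. Then K⊗a acts trivially on V for every a ∈ A, i.e. (K⊗A)·V = 0. -/

import Mathlib

noncomputable section

/-!
Common setup: a realization of the loop affine-Virasoro algebra
`𝔏(A) = ((g̊ ⊗ ℂ[t,t⁻¹] ⊕ ℂK) ⋊ Vir) ⊗ A`.

* `g` plays the role of the finite dimensional simple Lie algebra `g̊`.
* `A` is a commutative associative unital `ℂ`-algebra.
* `L` plays the role of `𝔏(A)`; the structure fields record the generators
  `E n x a = (x ⊗ tⁿ) ⊗ a`, `D n a = dₙ ⊗ a`, `K a = K ⊗ a`, `C a = C ⊗ a`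
  together with the defining bracket relations, and the fact that the
  generators span `L`.
-/

/-- An ideal of a `ℂ`-algebra is cofinite if the quotient is finite dimensional. -/
def IsCofiniteIdeal {A : Type*} [CommRing A] [Algebra ℂ A] (I : Ideal A) : Prop :=
  FiniteDimensional ℂ (A ⧸ I)

/-- A realization of the loop affine-Virasoro algebra `𝔏(A)`. -/
structure LoopAffVir (g : Type*) [LieRing g] [LieAlgebra ℂ g]
    (A : Type*) [CommRing A] [Algebra ℂ A]
    (L : Type*) [LieRing L] [LieAlgebra ℂ L] : Type _ where
  /-- the Cartan subalgebra `h̊` of `g̊` -/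
  H : LieSubalgebra ℂ g
  isCartan : H.IsCartanSubalgebra
  /-- the invariant nondegenerate symmetric bilinear form on `g̊` -/
  form : g →ₗ[ℂ] g →ₗ[ℂ] ℂ
  form_symm : ∀ x y : g, form x y = form y x
  form_nondeg : ∀ x : g, (∀ y : g, form x y = 0) → x = 0
  form_invariant : ∀ x y z : g, form ⁅x, y⁆ z = form x ⁅y, z⁆
  /-- the root space `g̊_α` -/
  rootSp : Module.Dual ℂ H → Submodule ℂ g
  rootSp_def : ∀ (α : Module.Dual ℂ H) (x : g),
      x ∈ rootSp α ↔ ∀ h : H, ⁅(h : g), x⁆ = α h • x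
  /-- a choice of positive roots `Δ̊₊` -/
  Δplus : Set (Module.Dual ℂ H)
  Δplus_root : ∀ α ∈ Δplus, α ≠ 0 ∧ rootSp α ≠ ⊥
  Δplus_cover : ∀ α : Module.Dual ℂ H, α ≠ 0 → rootSp α ≠ ⊥ → α ∈ Δplus ∨ -α ∈ Δplus
  Δplus_disj : ∀ α ∈ Δplus, -α ∉ Δplus
  /-- `E n x a = (x ⊗ tⁿ) ⊗ a` -/
  E : ℤ → g →ₗ[ℂ] A →ₗ[ℂ] L
  /-- `D n a = dₙ ⊗ a` -/
  D : ℤ → A →ₗ[ℂ] L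
  /-- `K a = K ⊗ a` (affine center) -/
  K : A →ₗ[ℂ] L
  /-- `C a = C ⊗ a` (Virasoro center) -/
  C : A →ₗ[ℂ] L
  lie_EE : ∀ (n m : ℤ) (x y : g) (a b : A),
      ⁅E n x a, E m y b⁆ = E (n + m) ⁅x, y⁆ (a * b)
        + (if m = -n then (n : ℂ) * form x y else 0) • K (a * b)
  lie_DE : ∀ (n m : ℤ) (x : g) (a b : A),
      ⁅D n a, E m x b⁆ = (m : ℂ) • E (m + n) x (a * b)
  lie_DD : ∀ (n m : ℤ) (a b : A),
      ⁅D n a, D m b⁆ = ((m : ℂ) - (n : ℂ)) • D (n + m) (a * b)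
        + (if m = -n then (((n : ℂ) ^ 3 - (n : ℂ)) / 12) else 0) • C (a * b)
  K_central : ∀ (a : A) (z : L), ⁅K a, z⁆ = 0
  C_central : ∀ (a : A) (z : L), ⁅C a, z⁆ = 0
  span_top : Submodule.span ℂ
      ({z : L | ∃ (n : ℤ) (x : g) (a : A), z = E n x a}
        ∪ {z : L | ∃ (n : ℤ) (a : A), z = D n a}
        ∪ {z : L | ∃ a : A, z = K a}
        ∪ {z : L | ∃ a : A, z = C a}) = ⊤

namespace LoopAffVir

variable {g A L : Type*} [LieRing g] [LieAlgebra ℂ g] [CommRing A] [Algebra ℂ A]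
  [LieRing L] [LieAlgebra ℂ L] (S : LoopAffVir g A L)

/-- Generators of the Cartan subalgebra `h̄ = h̊ ⊕ ℂK ⊕ ℂd₀ ⊕ ℂC ⊆ 𝔏 ⊗ 1`. -/
def cartanSet : Set L :=
  {z : L | ∃ h ∈ S.H, z = S.E 0 h 1} ∪ {S.K 1, S.D 0 1, S.C 1}

/-- The Cartan subalgebra `h̄` of `𝔏(A)`. -/
def cartan : Submodule ℂ L := Submodule.span ℂ S.cartanSet

/-- `h ∈ h̊` as an element of `h̄`. -/
def eH (h : S.H) : S.cartan :=
  ⟨S.E 0 h 1, Submodule.subset_span (Set.mem_union_left _ ⟨(h : g), h.2, rfl⟩)⟩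

/-- `K ⊗ 1` as an element of `h̄`. -/
def K1 : S.cartan :=
  ⟨S.K 1, Submodule.subset_span (Set.mem_union_right _ (by simp))⟩

/-- `d₀ ⊗ 1` as an element of `h̄`. -/
def d0 : S.cartan :=
  ⟨S.D 0 1, Submodule.subset_span (Set.mem_union_right _ (by simp))⟩

/-- `C ⊗ 1` as an element of `h̄`. -/
def C1 : S.cartan :=
  ⟨S.C 1, Submodule.subset_span (Set.mem_union_right _ (by simp))⟩

variable (V : Type*) [AddCommGroup V] [Module ℂ V] [LieRingModule L V] [LieModule ℂ L V]

/-- The weight space of an `𝔏(A)`-module attached to `χ ∈ h̄*`. -/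
def wtSpace (χ : Module.Dual ℂ S.cartan) : Submodule ℂ V where
  carrier := {v : V | ∀ h : S.cartan, ⁅(h : L), v⁆ = χ h • v}
  add_mem' := by
    intro a b ha hb h
    rw [lie_add, ha h, hb h, smul_add]
  zero_mem' := by
    intro h
    rw [lie_zero, smul_zero]
  smul_mem' := by
    intro c v hv h
    rw [lie_smul, hv h, smul_comm]

/-- The set of weights `P(V)`. -/
def weights : Set (Module.Dual ℂ S.cartan) := {χ | S.wtSpace V χ ≠ ⊥}

/-- `V` is a weight module: it is the (direct) sum of its weight spaces. -/
def IsWeightModule : Prop := (⨆ χ : Module.Dual ℂ S.cartan, S.wtSpace V χ) = ⊤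

/-- All weight spaces are finite dimensional. -/
def HasFinDimWeightSpaces : Prop :=
  ∀ χ : Module.Dual ℂ S.cartan, FiniteDimensional ℂ (S.wtSpace V χ)

/-- Integrability: `V` is a weight module with finite dimensional weight spaces on which all
real root vectors `(x ⊗ tⁿ) ⊗ a`, `x ∈ g̊_α`, `α ∈ Δ̊`, act locally nilpotently. -/
def IsIntegrable : Prop :=
  S.IsWeightModule V ∧ S.HasFinDimWeightSpaces V ∧
    ∀ α : Module.Dual ℂ S.H, α ≠ 0 → S.rootSp α ≠ ⊥ →
      ∀ x ∈ S.rootSp α, ∀ (n : ℤ) (a : A) (v : V),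
        ∃ N : ℕ, ((LieModule.toEnd ℂ L V) (S.E n x a) ^ N) v = 0

/-- The highest weight space
`M = {v ∈ V : (x ⊗ tⁿ ⊗ a) v = 0 ∀ x ∈ g̊_α, α ∈ Δ̊₊, n ∈ ℤ, a ∈ A}` for the second
triangular decomposition. -/
def hwSpace : Submodule ℂ V where
  carrier := {v : V | ∀ α ∈ S.Δplus, ∀ x ∈ S.rootSp α, ∀ (n : ℤ) (a : A), ⁅S.E n x a, v⁆ = 0}
  add_mem' := by
    intro u w hu hw α hα x hx n a
    rw [lie_add, hu α hα x hx n a, hw α hα x hx n a, add_zero]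
  zero_mem' := by
    intro α hα x hx n a
    rw [lie_zero]
  smul_mem' := by
    intro t v hv α hα x hx n a
    rw [lie_smul, hv α hα x hx n a, smul_zero]

/-- Generators of `𝔏(A)⁺ = (n₊ ⊕ Vir⁺) ⊗ A` for the natural triangular decomposition. -/
def plusSet : Set L :=
  {z : L | ∃ n : ℤ, 0 < n ∧ ∃ (x : g) (a : A), z = S.E n x a} ∪
  {z : L | ∃ α ∈ S.Δplus, ∃ x ∈ S.rootSp α, ∃ a : A, z = S.E 0 x a} ∪
  {z : L | ∃ n : ℤ, 0 < n ∧ ∃ a : A, z = S.D n a}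

/-- Generators of `𝔏(A)⁻ = (n₋ ⊕ Vir⁻) ⊗ A` for the natural triangular decomposition. -/
def minusSet : Set L :=
  {z : L | ∃ n : ℤ, n < 0 ∧ ∃ (x : g) (a : A), z = S.E n x a} ∪
  {z : L | ∃ α ∈ S.Δplus, ∃ x ∈ S.rootSp (-α), ∃ a : A, z = S.E 0 x a} ∪
  {z : L | ∃ n : ℤ, n < 0 ∧ ∃ a : A, z = S.D n a}

/-- Generators of `𝔏(A)⁰ = h̄ ⊗ A`. -/
def cartanASet : Set L :=
  {z : L | ∃ h ∈ S.H, ∃ a : A, z = S.E 0 h a} ∪ {z : L | ∃ a : A, z = S.K a}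
    ∪ {z : L | ∃ a : A, z = S.D 0 a} ∪ {z : L | ∃ a : A, z = S.C a}

/-- `𝔏(A)⁰ = h̄ ⊗ A` as a subspace of `L`. -/
def cartanA : Submodule ℂ L := Submodule.span ℂ S.cartanASet

/-- `h ⊗ a`, `h ∈ h̊`, as an element of `h̄ ⊗ A`. -/
def eHA (h : S.H) (a : A) : S.cartanA :=
  ⟨S.E 0 h a, Submodule.subset_span
    (Set.mem_union_left _ (Set.mem_union_left _ (Set.mem_union_left _ ⟨(h : g), h.2, a, rfl⟩)))⟩

/-- `K ⊗ a` as an element of `h̄ ⊗ A`. -/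
def KA (a : A) : S.cartanA :=
  ⟨S.K a, Submodule.subset_span
    (Set.mem_union_left _ (Set.mem_union_left _ (Set.mem_union_right _ ⟨a, rfl⟩)))⟩

/-- `d₀ ⊗ a` as an element of `h̄ ⊗ A`. -/
def DA0 (a : A) : S.cartanA :=
  ⟨S.D 0 a, Submodule.subset_span (Set.mem_union_left _ (Set.mem_union_right _ ⟨a, rfl⟩))⟩

/-- `C ⊗ a` as an element of `h̄ ⊗ A`. -/
def CA (a : A) : S.cartanA :=
  ⟨S.C a, Submodule.subset_span (Set.mem_union_right _ ⟨a, rfl⟩)⟩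

/-- `V` is a highest weight module with highest weight `ψ : h̄ ⊗ A → ℂ` for the natural
triangular decomposition: some nonzero vector `v` is annihilated by `𝔏(A)⁺`, is a
`ψ`-eigenvector for `h̄ ⊗ A`, and generates `V`. -/
def IsHWModule (ψ : Module.Dual ℂ S.cartanA) : Prop :=
  ∃ v : V, v ≠ 0 ∧ (∀ z ∈ S.plusSet, ⁅z, v⁆ = 0) ∧
    (∀ h : S.cartanA, ⁅(h : L), v⁆ = ψ h • v) ∧
    ∀ W : LieSubmodule ℂ L V, v ∈ W → W = ⊤

/-- `(𝔏 ⊗ I) ⬝ V = 0`. -/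
def Annihilates (I : Ideal A) : Prop :=
  ∀ a ∈ I, (∀ (n : ℤ) (x : g) (v : V), ⁅S.E n x a, v⁆ = 0) ∧
    (∀ (n : ℤ) (v : V), ⁅S.D n a, v⁆ = 0) ∧
    (∀ v : V, ⁅S.K a, v⁆ = 0) ∧ (∀ v : V, ⁅S.C a, v⁆ = 0)

/-- `(𝔏₀ ⊗ R)` kills the subspace `X`, where `𝔏₀ = (h̊ ⊗ ℂ[t,t⁻¹] ⊕ ℂK) ⋊ Vir`. -/
def ZeroPartAnnOn (R : Ideal A) (X : Submodule ℂ V) : Prop :=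
  ∀ a ∈ R, ∀ v ∈ X,
    (∀ (n : ℤ) (h : g), h ∈ S.H → ⁅S.E n h a, v⁆ = 0) ∧
    (∀ n : ℤ, ⁅S.D n a, v⁆ = 0) ∧ ⁅S.K a, v⁆ = 0 ∧ ⁅S.C a, v⁆ = 0

/-- Generators of `𝔏(A)₀ = ((h̊ ⊗ ℂ[t,t⁻¹] ⊕ ℂK) ⋊ Vir) ⊗ A`. -/
def zeroPartSet : Set L :=
  {z : L | ∃ (n : ℤ) (h : g), h ∈ S.H ∧ ∃ a : A, z = S.E n h a}
    ∪ {z : L | ∃ a : A, z = S.K a}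
    ∪ {z : L | ∃ (n : ℤ) (a : A), z = S.D n a}
    ∪ {z : L | ∃ a : A, z = S.C a}

/-- Generators of `g(A) = (g̊ ⊗ ℂ[t,t⁻¹] ⊕ ℂK ⊕ ℂd₀) ⊗ A`. -/
def gASet : Set L :=
  {z : L | ∃ (n : ℤ) (x : g) (a : A), z = S.E n x a}
    ∪ {z : L | ∃ a : A, z = S.K a} ∪ {z : L | ∃ a : A, z = S.D 0 a}

/-- Generators of `(h̊ ⊗ ℂ[t,t⁻¹] ⊕ ℂK) ⊗ A`. -/
def heisSet : Set L :=
  {z : L | ∃ (n : ℤ) (h : g), h ∈ S.H ∧ ∃ a : A, z = S.E n h a}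
    ∪ {z : L | ∃ a : A, z = S.K a}

/-- The smallest subspace of `V` containing `X` and stable under the operators in `Ops`;
this models `U(⋯) ⬝ X`. -/
def opClosure (Ops : Set L) (X : Submodule ℂ V) : Submodule ℂ V :=
  sInf {N : Submodule ℂ V | X ≤ N ∧ ∀ z ∈ Ops, ∀ v ∈ N, ⁅z, v⁆ ∈ N}

/-- The reflection `λ ↦ λ - λ(b) • β` on `h̄*`. -/
def reflMap (b : S.cartan) (β : Module.Dual ℂ S.cartan) :
    Module.End ℂ (Module.Dual ℂ S.cartan) :=
  LinearMap.id - LinearMap.smulRight (Module.Dual.eval ℂ S.cartan b) β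

/-- Given `ν⁻¹ : h̊* → h̊` (inverse of the form), the coroot
`β∨ = α∨ + (2 / ⟨α,α⟩) K ∈ h̄` of the real root `β = α + nδ`. -/
def corootOf (nu : Module.Dual ℂ S.H → S.H) (α : Module.Dual ℂ S.H) : S.cartan :=
  (2 / α (nu α)) • (S.eH (nu α) + S.K1)

/-- The (affine) Weyl group `W` of `𝔏(A)`, generated by the reflections in the real
roots `β = α + nδ`, acting on `h̄*`. -/
def weylMonoid (nu : Module.Dual ℂ S.H → S.H)
    (ext : Module.Dual ℂ S.H →ₗ[ℂ] Module.Dual ℂ S.cartan)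
    (δf : Module.Dual ℂ S.cartan) :
    Submonoid (Module.End ℂ (Module.Dual ℂ S.cartan)) :=
  Submonoid.closure {w | ∃ (α : Module.Dual ℂ S.H) (n : ℤ), α ≠ 0 ∧ S.rootSp α ≠ ⊥ ∧
    w = S.reflMap (S.corootOf nu α) (ext α + (n : ℂ) • δf)}

/-- The reflection `σ_α : h ↦ h - α(h) • α∨` on `h̊`. -/
def finReflMap (nu : Module.Dual ℂ S.H → S.H) (α : Module.Dual ℂ S.H) :
    Module.End ℂ S.H :=
  LinearMap.id - LinearMap.smulRight (α : S.H →ₗ[ℂ] ℂ) ((2 / α (nu α)) • nu α)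

/-- The finite Weyl group `W̊` of `g̊`, acting on `h̊`. -/
def finWeyl (nu : Module.Dual ℂ S.H → S.H) : Submonoid (Module.End ℂ S.H) :=
  Submonoid.closure {w | ∃ α : Module.Dual ℂ S.H, α ≠ 0 ∧ S.rootSp α ≠ ⊥ ∧
    w = S.finReflMap nu α}

/-- `ℤ[W̊(θ∨)] ⊆ h̊`: the additive group generated by the `W̊`-orbit of `θ∨`. -/
def thetaOrbitSpan (nu : Module.Dual ℂ S.H → S.H) (θ : Module.Dual ℂ S.H) :
    AddSubgroup S.H :=
  AddSubgroup.closure {h | ∃ w ∈ S.finWeyl nu, h = w ((2 / θ (nu θ)) • nu θ)}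

/-- The `d₀`-eigenspace of `V` for the eigenvalue `μ`. -/
def d0Eig (μ : ℂ) : Submodule ℂ V where
  carrier := {v : V | ⁅S.D 0 1, v⁆ = μ • v}
  add_mem' := by
    intro a b ha hb
    show ⁅S.D 0 1, a + b⁆ = μ • (a + b)
    rw [lie_add, ha, hb, smul_add]
  zero_mem' := by
    show ⁅S.D 0 1, (0 : V)⁆ = μ • (0 : V)
    rw [lie_zero, smul_zero]
  smul_mem' := by
    intro c v hv
    show ⁅S.D 0 1, c • v⁆ = μ • c • v
    rw [lie_smul, hv, smul_comm]

end LoopAffVir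

end

/-!
Let `α` be a root with coroot `h` and let `λ` be a weight of `V` with `m = λ(h) ≠ 0`. As `K ⊗ 1`
acts by zero, `α` and `α + nδ` have `sl₂`-triples acting with the same `h`, so integrability gives
two successive reflections whose composite embeds `V_λ` into `V_{λ + mnδ}`. Hence the dimensions of
the spaces `V_{λ + jδ}` are bounded. By Schur's lemma `K ⊗ a` acts by a scalar `c`, and the
operators `h ⊗ tⁿ`, `h ⊗ t⁻ⁿ ⊗ a` with `n > 0` satisfy the relations of a Heisenberg algebra with
central charge proportional to `c`. Its graded modules have unbounded dimensions when `c ≠ 0`, so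
`c = 0`. If instead `h` acts by zero on `V`, then so does the root vector of `α`, hence all
`h ⊗ tⁿ ⊗ b`, and hence `K ⊗ a`.
-/

open Module

section JointEigenvectors

attribute [local instance] LieRing.ofAssociativeRing

theorem exists_joint_eigenvector {𝕜 V ι : Type*} [Field 𝕜] [IsAlgClosed 𝕜] [AddCommGroup V]
    [Module 𝕜 V] {T : ι → End 𝕜 V} (hT : ∀ i j, Commute (T i) (T j)) {W : Submodule 𝕜 V}
    [FiniteDimensional 𝕜 W] (hW : W ≠ ⊥) (hTW : ∀ i, ∀ v ∈ W, T i v ∈ W) :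
    ∃ v ∈ W, v ≠ 0 ∧ ∀ i, ∃ μ : 𝕜, T i v = μ • v := by
  have : Nontrivial W := Submodule.nontrivial_iff_ne_bot.mpr hW
  let T' (i : ι) : End 𝕜 W := (T i).restrict (hTW i)
  let 𝔞 : LieSubalgebra 𝕜 (End 𝕜 W) := LieSubalgebra.lieSpan 𝕜 _ (Set.range T')
  have : IsLieAbelian 𝔞 := by
    rw [LieSubalgebra.isLieAbelian_lieSpan_iff]
    rintro _ ⟨i, rfl⟩ _ ⟨j, rfl⟩
    refine sub_eq_zero.mpr (LinearMap.ext fun w ↦ Subtype.ext ?_)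
    exact congrArg (· (w : V)) (hT i j)
  obtain ⟨χ, hχ⟩ := LieModule.exists_nontrivial_weightSpace_of_isNilpotent 𝕜 𝔞 W
  obtain ⟨⟨w, hw⟩, hw0⟩ := exists_ne (0 : LieModule.weightSpace W χ)
  refine ⟨w, w.2, fun h ↦ hw0 (Subtype.ext (Subtype.ext h)), fun i ↦ ?_⟩
  have hi := (LieModule.mem_weightSpace χ w).mp hw
    ⟨T' i, LieSubalgebra.subset_lieSpan ⟨i, rfl⟩⟩
  exact ⟨_, congrArg Subtype.val hi⟩

end JointEigenvectors

theorem linearIndependent_of_apply_eq_zero {R V V' ι : Type*} [Ring R] [IsDomain R]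
    [AddCommGroup V] [Module R V] [AddCommGroup V'] [Module R V'] [IsTorsionFree R V'] {w : ι → V}
    (T : ι → V →ₗ[R] V') (hne : ∀ i j, i ≠ j → T i (w j) = 0) (h : ∀ i, T i (w i) ≠ 0) :
    LinearIndependent R w := by
  refine linearIndependent_iff'.mpr fun s a ha i hi ↦ ?_
  have hsum : T i (∑ j ∈ s, a j • w j) = a i • T i (w i) := by
    rw [map_sum, Finset.sum_eq_single_of_mem i hi fun j _ hj ↦ by
      rw [map_smul, hne i j hj.symm, smul_zero], map_smul]
  rw [ha, map_zero, eq_comm] at hsum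
  exact (smul_eq_zero_iff_left (h i)).mp hsum

section Heisenberg

variable {R V ι : Type*} [CommRing R] [AddCommGroup V] [Module R V]

/-- The canonical commutation relations `[p i, p j] = [q i, q j] = 0`, `[p i, q j] = δᵢⱼ c i` of a
Heisenberg algebra, for operators on a module. -/
structure IsHeisenbergFamily (p q : ι → End R V) (c : ι → R) : Prop where
  commute_p : ∀ i j, Commute (p i) (p j)
  commute_q : ∀ i j, Commute (q i) (q j)
  commute_p_q : ∀ i j, i ≠ j → Commute (p i) (q j)
  mul_sub_mul : ∀ i, p i * q i - q i * p i = c i • 1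

theorem apply_pow_eq_smul_of_mul_eq {T p : End R V} {d : R} (h : T * p = p * T + d • p) {v : V}
    {μ : R} (hμ : T v = μ • v) (k : ℕ) : T ((p ^ k) v) = (μ + k * d) • (p ^ k) v := by
  induction k with
  | zero => simpa using hμ
  | succ k ih =>
    calc T ((p ^ (k + 1)) v) = (T * p) ((p ^ k) v) := by rw [pow_succ']; rfl
      _ = p (T ((p ^ k) v)) + d • p ((p ^ k) v) := by rw [h]; rfl
      _ = (μ + (k + 1 : ℕ) * d) • p ((p ^ k) v) := by
        rw [ih, map_smul, ← add_smul]; push_cast; ring_nf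
      _ = _ := by rw [pow_succ']; rfl

namespace IsHeisenbergFamily

variable {p q : ι → End R V} {c : ι → R}

theorem comp {κ : Type*} (hH : IsHeisenbergFamily p q c) {f : κ → ι} (hf : f.Injective) :
    IsHeisenbergFamily (p ∘ f) (q ∘ f) (c ∘ f) where
  commute_p _ _ := hH.commute_p _ _
  commute_q _ _ := hH.commute_q _ _
  commute_p_q _ _ h := hH.commute_p_q _ _ (hf.ne h)
  mul_sub_mul _ := hH.mul_sub_mul _

theorem commute_mul_p (hH : IsHeisenbergFamily p q c) {i j : ι} (hij : i ≠ j) :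
    Commute (p i * q i) (p j) :=
  (hH.commute_p i j).mul_left (hH.commute_p_q j i hij.symm).symm

theorem commute_mul_q (hH : IsHeisenbergFamily p q c) {i j : ι} (hij : i ≠ j) :
    Commute (p i * q i) (q j) :=
  (hH.commute_p_q i j hij).mul_left (hH.commute_q i j)

theorem commute_mul_mul (hH : IsHeisenbergFamily p q c) (i j : ι) :
    Commute (p i * q i) (p j * q j) := by
  obtain rfl | hij := eq_or_ne i j
  · exact Commute.refl _
  · exact (hH.commute_mul_p hij).mul_right (hH.commute_mul_q hij)

theorem mul_eq_mul_add (hH : IsHeisenbergFamily p q c) (i : ι) : p i * q i = q i * p i + c i • 1 :=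
  sub_eq_iff_eq_add'.mp (hH.mul_sub_mul i)

theorem mul_apply_p_pow (hH : IsHeisenbergFamily p q c) {i : ι} {v : V} {μ : R}
    (hμ : (p i * q i) v = μ • v) (k : ℕ) :
    (p i * q i) ((p i ^ k) v) = (μ + k * -c i) • (p i ^ k) v := by
  refine apply_pow_eq_smul_of_mul_eq ?_ hμ k
  nth_rewrite 2 [hH.mul_eq_mul_add]
  simp [mul_add, mul_assoc]

theorem mul_apply_q_pow (hH : IsHeisenbergFamily p q c) {i : ι} {v : V} {μ : R}
    (hμ : (p i * q i) v = μ • v) (k : ℕ) :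
    (p i * q i) ((q i ^ k) v) = (μ + k * c i) • (q i ^ k) v := by
  refine apply_pow_eq_smul_of_mul_eq ?_ hμ k
  nth_rewrite 1 [hH.mul_eq_mul_add]
  simp [add_mul, mul_assoc]

theorem linearIndependent_pow_apply [IsDomain R] [IsTorsionFree R V]
    (hH : IsHeisenbergFamily p q c) {v : V} {μ : ι → R} (hμ : ∀ i, (p i * q i) v = μ i • v)
    {X : ι → End R V} (hX : ∀ i, X i = p i ∨ X i = q i)
    {e : ι → ℕ} (hXe : ∀ i, (p i * q i - μ i • 1) ((X i ^ e i) v) ≠ 0) :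
    LinearIndependent R fun i ↦ (X i ^ e i) v := by
  refine linearIndependent_of_apply_eq_zero (fun i ↦ p i * q i - μ i • 1) (fun i j hij ↦ ?_) hXe
  have hcomm : Commute (p i * q i) (X j) := by
    obtain h | h := hX j <;> rw [h]
    exacts [hH.commute_mul_p hij, hH.commute_mul_q hij]
  rw [LinearMap.sub_apply, ← End.mul_apply _ (X j ^ e j), hcomm.pow_right, End.mul_apply, hμ,
    map_smul, LinearMap.smul_apply, End.one_apply, sub_self]

variable {𝕜 : Type*} [Field 𝕜] [CharZero 𝕜] [Module 𝕜 V] {p q : ι → End 𝕜 V} {c : ι → 𝕜}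

/-- If `k`, `l` are the largest exponents with `p ^ k v ≠ 0`, `q ^ l v ≠ 0`, then the eigenvalue of
`p q` is both `(k + 1) c` and `-l c`. -/
theorem pow_apply_ne_zero_or (hH : IsHeisenbergFamily p q c) {i : ι} (hc : c i ≠ 0) {v : V}
    (hv : v ≠ 0) {μ : 𝕜} (hμ : (p i * q i) v = μ • v) :
    (∀ k, (p i ^ k) v ≠ 0) ∨ ∀ k, (q i ^ k) v ≠ 0 := by
  by_contra! hcon
  obtain ⟨k, hk0, hk⟩ := Nat.exists_not_and_succ_of_not_zero_of_exists
    (p := fun k ↦ (p i ^ k) v = 0) (by simpa using hv) hcon.1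
  obtain ⟨l, hl0, hl⟩ := Nat.exists_not_and_succ_of_not_zero_of_exists
    (p := fun k ↦ (q i ^ k) v = 0) (by simpa using hv) hcon.2
  rw [pow_succ', End.mul_apply] at hk hl
  have hμk : μ + k * -c i = c i := by
    refine smul_left_injective 𝕜 hk0 ?_
    beta_reduce
    rw [← hH.mul_apply_p_pow hμ k, hH.mul_eq_mul_add]
    simp [hk]
  have hμl : μ + l * c i = 0 := by
    refine (smul_eq_zero_iff_left hl0).mp ?_
    rw [← hH.mul_apply_q_pow hμ l, End.mul_apply, hl, map_zero]
  have hkl : c i * (k + l + 1 : ℕ) = 0 := by push_cast; linear_combination hμl - hμk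
  exact mul_ne_zero hc (Nat.cast_ne_zero.mpr (by omega)) hkl

theorem exists_pow_apply_ne_zero (hH : IsHeisenbergFamily p q c) {i : ι} (hc : c i ≠ 0) {v : V}
    (hv : v ≠ 0) {μ : 𝕜} (hμ : (p i * q i) v = μ • v) :
    ∃ X, (X = p i ∨ X = q i) ∧ ∀ k, k ≠ 0 → (p i * q i - μ • 1) ((X ^ k) v) ≠ 0 := by
  have hck {k : ℕ} (hk : k ≠ 0) : (k : 𝕜) * c i ≠ 0 := mul_ne_zero (Nat.cast_ne_zero.mpr hk) hc
  obtain hp | hq := hH.pow_apply_ne_zero_or hc hv hμ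
  · refine ⟨p i, .inl rfl, fun k hk ↦ ?_⟩
    rw [LinearMap.sub_apply, hH.mul_apply_p_pow hμ, LinearMap.smul_apply, End.one_apply, ← sub_smul,
      add_sub_cancel_left, mul_neg]
    exact smul_ne_zero (neg_ne_zero.mpr (hck hk)) (hp k)
  · refine ⟨q i, .inr rfl, fun k hk ↦ ?_⟩
    rw [LinearMap.sub_apply, hH.mul_apply_q_pow hμ, LinearMap.smul_apply, End.one_apply, ← sub_smul,
      add_sub_cancel_left]
    exact smul_ne_zero (hck hk) (hq k)

end IsHeisenbergFamily

theorem pow_apply_mem_of_degree {U : ℤ → Submodule R V} {X : End R V} {r : ℤ}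
    (hX : ∀ j, ∀ v ∈ U j, X v ∈ U (j + r)) {j : ℤ} {v : V} (hv : v ∈ U j) (k : ℕ) :
    (X ^ k) v ∈ U (j + k * r) := by
  induction k with
  | zero => simpa using hv
  | succ k ih =>
    rw [pow_succ', End.mul_apply, Nat.cast_succ, add_one_mul, ← add_assoc]
    exact hX _ _ ih

namespace IsHeisenbergFamily

variable {𝕜 : Type*} [Field 𝕜] [CharZero 𝕜] [IsAlgClosed 𝕜] [Module 𝕜 V] {p q : ι → End 𝕜 V}
  {c : ι → 𝕜} {U : ℤ → Submodule 𝕜 V} [∀ j, FiniteDimensional 𝕜 (U j)]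

/-- Either `p i` or `q i` acts freely on a joint eigenvector `v ∈ U 0` of the operators `p j q j`;
the powers of degree `± N` of these free operators send `v` to linearly independent vectors. -/
theorem card_le_finrank_add_finrank [Fintype ι] (hH : IsHeisenbergFamily p q c)
    (hc : ∀ i, c i ≠ 0) (hU : U 0 ≠ ⊥) {r : ι → ℕ} (hp : ∀ i j, ∀ v ∈ U j, p i v ∈ U (j + r i))
    (hq : ∀ i j, ∀ v ∈ U j, q i v ∈ U (j + -r i)) {N : ℕ} (hN : N ≠ 0) (hr : ∀ i, r i ∣ N) :
    Fintype.card ι ≤ finrank 𝕜 (U N) + finrank 𝕜 (U (-N)) := by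
  obtain ⟨v, hv, hv0, hμ⟩ := exists_joint_eigenvector hH.commute_mul_mul hU fun i v hv ↦ by
    simpa using hp i _ _ (hq i _ _ hv)
  choose μ hμ using hμ
  choose X hX hX0 using fun i ↦ hH.exists_pow_apply_ne_zero (hc i) hv0 (hμ i)
  choose e he using fun i ↦ dvd_def.mp (hr i)
  have he0 (i) : e i ≠ 0 := fun h ↦ hN (by rw [he i, h, mul_zero])
  have hmem (i) : (X i ^ e i) v ∈ U N ⊔ U (-N) := by
    have heN : (e i : ℤ) * r i = N := mod_cast (mul_comm _ _).trans (he i).symm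
    obtain h | h := hX i <;> rw [h]
    · refine Submodule.mem_sup_left ?_
      simpa only [heN, zero_add] using pow_apply_mem_of_degree (hp i) hv (e i)
    · refine Submodule.mem_sup_right ?_
      simpa only [mul_neg, heN, zero_add] using pow_apply_mem_of_degree (hq i) hv (e i)
  have hli : LinearIndependent 𝕜 fun i ↦ (⟨_, hmem i⟩ : ↥(U N ⊔ U (-N))) :=
    .of_comp (Submodule.subtype _) <|
      hH.linearIndependent_pow_apply hμ hX fun i ↦ hX0 i _ (he0 i)
  exact hli.fintype_card_le_finrank.trans (Submodule.finrank_add_le_finrank_add_finrank _ _)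

theorem exists_lt_finrank {p q : ℕ → End 𝕜 V} {c : ℕ → 𝕜} (hH : IsHeisenbergFamily p q c)
    (hc : ∀ n, c n ≠ 0) (hU : U 0 ≠ ⊥) (hp : ∀ n j, ∀ v ∈ U j, p n v ∈ U (j + (n + 1 : ℕ)))
    (hq : ∀ n j, ∀ v ∈ U j, q n v ∈ U (j + -(n + 1 : ℕ))) (d : ℕ) : ∃ j, d < finrank 𝕜 (U j) := by
  by_contra! hd
  have hcard := (hH.comp (Fin.val_injective (n := 2 * d + 1))).card_le_finrank_add_finrank
    (fun i ↦ hc i) hU (fun i ↦ hp i) (fun i ↦ hq i) (Nat.factorial_ne_zero (2 * d + 1))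
    fun i ↦ Nat.dvd_factorial i.val.succ_pos i.2
  have := hd (2 * d + 1).factorial
  have := hd (-(2 * d + 1).factorial)
  rw [Fintype.card_fin] at hcard
  omega

end IsHeisenbergFamily

end Heisenberg

section Sl2

open LieModule

variable {𝕜 L M : Type*} [Field 𝕜] [LieRing L] [LieAlgebra 𝕜 L] [AddCommGroup M] [Module 𝕜 M]
  [LieRingModule L M] [LieModule 𝕜 L M] {h e f : L}

theorem sl2_lie_h_pow_toEnd_f (t : IsSl2Triple h e f) {v : M} {μ : 𝕜} (hv : ⁅h, v⁆ = μ • v)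
    (n : ℕ) : ⁅h, (toEnd 𝕜 L M f ^ n) v⁆ = (μ - 2 * n) • (toEnd 𝕜 L M f ^ n) v := by
  have hhf : toEnd 𝕜 L M h * toEnd 𝕜 L M f = toEnd 𝕜 L M f * toEnd 𝕜 L M h +
      (-2 : 𝕜) • toEnd 𝕜 L M f := by
    ext u
    simp [leibniz_lie h f u, t.lie_lie_smul_f 𝕜, add_comm]
  have hshift := apply_pow_eq_smul_of_mul_eq hhf hv n
  rwa [mul_neg, ← sub_eq_add_neg, mul_comm] at hshift

theorem sl2_lie_e_pow_succ_toEnd_f (t : IsSl2Triple h e f) {v : M} {μ : 𝕜} (hv : ⁅h, v⁆ = μ • v)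
    (n : ℕ) : ⁅e, (toEnd 𝕜 L M f ^ (n + 1)) v⁆ =
      (toEnd 𝕜 L M f ^ (n + 1)) ⁅e, v⁆ + ((n + 1) * (μ - n)) • (toEnd 𝕜 L M f ^ n) v := by
  have hpow (k : ℕ) (u : M) : (toEnd 𝕜 L M f ^ (k + 1)) u = ⁅f, (toEnd 𝕜 L M f ^ k) u⁆ := by
    rw [pow_succ', End.mul_apply, toEnd_apply_apply]
  induction n with
  | zero => simp [leibniz_lie e f v, t.lie_e_f, hv, add_comm]
  | succ n ih =>
    rw [hpow (n + 1), leibniz_lie, t.lie_e_f, sl2_lie_h_pow_toEnd_f t hv, ih, lie_add, lie_smul,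
      ← hpow, ← hpow]
    push_cast
    module

variable [CharZero 𝕜]

/-- Unless `μ = k`, the vector `⁅e, v⁆` satisfies the hypotheses with `k + 1` and `μ + 2` in place
of `k` and `μ`. -/
theorem sl2_exists_weight_eq_sub (t : IsSl2Triple h e f) {v : M} {μ : 𝕜} (hv : ⁅h, v⁆ = μ • v)
    {N k : ℕ} (he : (toEnd 𝕜 L M e ^ N) v = 0) (hk : (toEnd 𝕜 L M f ^ (k + 1)) v = 0)
    (hk0 : (toEnd 𝕜 L M f ^ k) v ≠ 0) : ∃ j : ℕ, μ = k - j := by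
  induction N generalizing v μ k with
  | zero =>
    have hv0 : v = 0 := by simpa using he
    exact absurd (by rw [hv0, map_zero]) hk0
  | succ N ih =>
    by_cases hμk : μ = k
    · exact ⟨0, by simpa using hμk⟩
    have hwt : ⁅h, ⁅e, v⁆⁆ = (μ + 2) • ⁅e, v⁆ := by
      rw [leibniz_lie, t.lie_h_e_smul 𝕜, hv, lie_smul, smul_lie, add_smul, add_comm]
    have hsucc : (toEnd 𝕜 L M f ^ (k + 1)) ⁅e, v⁆ ≠ 0 := by
      intro h0
      have := sl2_lie_e_pow_succ_toEnd_f t hv k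
      rw [hk, lie_zero, h0, zero_add] at this
      exact smul_ne_zero (mul_ne_zero k.cast_add_one_ne_zero (sub_ne_zero.mpr hμk)) hk0 this.symm
    have hsucc' : (toEnd 𝕜 L M f ^ (k + 1 + 1)) ⁅e, v⁆ = 0 := by
      have := sl2_lie_e_pow_succ_toEnd_f t hv (k + 1)
      rwa [pow_succ' _ (k + 1), End.mul_apply, hk, map_zero, lie_zero, smul_zero, add_zero,
        ← pow_succ', eq_comm] at this
    obtain ⟨j, hj⟩ := ih hwt (by rwa [← toEnd_apply_apply 𝕜 L M, ← End.mul_apply, ← pow_succ])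
      hsucc' hsucc
    refine ⟨j + 1, ?_⟩
    push_cast at hj ⊢
    linear_combination hj

theorem sl2_exists_weight_eq_intCast (t : IsSl2Triple h e f) {v : M} {μ : 𝕜} (hv0 : v ≠ 0)
    (hv : ⁅h, v⁆ = μ • v) (he : ∃ N, (toEnd 𝕜 L M e ^ N) v = 0)
    (hf : ∃ N, (toEnd 𝕜 L M f ^ N) v = 0) : ∃ m : ℤ, μ = m := by
  obtain ⟨k, hk0, hk⟩ := Nat.exists_not_and_succ_of_not_zero_of_exists
    (p := fun k ↦ (toEnd 𝕜 L M f ^ k) v = 0) (by simpa using hv0) hf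
  obtain ⟨N, hN⟩ := he
  obtain ⟨j, hj⟩ := sl2_exists_weight_eq_sub t hv hN hk hk0
  exact ⟨k - j, by simpa using hj⟩

theorem sl2_pow_toEnd_f_ne_zero (t : IsSl2Triple h e f) {v : M} (hv0 : v ≠ 0) {m : ℕ}
    (hv : ⁅h, v⁆ = (m : 𝕜) • v) (he : ∃ N, (toEnd 𝕜 L M e ^ N) v = 0) :
    (toEnd 𝕜 L M f ^ m) v ≠ 0 := by
  intro hm
  obtain ⟨k, hk0, hk⟩ := Nat.exists_not_and_succ_of_not_zero_of_exists
    (p := fun k ↦ (toEnd 𝕜 L M f ^ k) v = 0) (by simpa using hv0) ⟨m, hm⟩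
  have hkm : k < m := not_le.mp fun hmk ↦ hk0 (End.pow_map_zero_of_le hmk hm)
  obtain ⟨N, hN⟩ := he
  obtain ⟨j, hj⟩ := sl2_exists_weight_eq_sub t hv hN hk hk0
  have hmj : m + j = k := by exact_mod_cast (by rw [hj]; ring : (m : 𝕜) + j = k)
  omega

end Sl2

section CentralElements

open LieModule

variable {𝕜 L V : Type*} [Field 𝕜] [IsAlgClosed 𝕜] [LieRing L] [LieAlgebra 𝕜 L] [AddCommGroup V]
  [Module 𝕜 V] [LieRingModule L V] [LieModule 𝕜 L V]

theorem exists_forall_lie_eq_smul_of_central [IsIrreducible 𝕜 L V] {z : L}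
    (hz : ∀ w : L, ⁅z, w⁆ = 0) {W : Submodule 𝕜 V} [FiniteDimensional 𝕜 W] (hW : W ≠ ⊥)
    (hzW : ∀ v ∈ W, ⁅z, v⁆ ∈ W) : ∃ c : 𝕜, ∀ v : V, ⁅z, v⁆ = c • v := by
  obtain ⟨v, -, hv0, hv⟩ := exists_joint_eigenvector (T := fun _ : Unit ↦ toEnd 𝕜 L V z)
    (fun _ _ ↦ .refl _) hW fun _ ↦ hzW
  obtain ⟨c, hc⟩ := hv ()
  let E : LieSubmodule 𝕜 L V :=
    { (toEnd 𝕜 L V z).eigenspace c with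
      lie_mem := fun {w u} hu ↦ End.mem_eigenspace_iff.mpr <| by
        have hu : ⁅z, u⁆ = c • u := End.mem_eigenspace_iff.mp hu
        rw [toEnd_apply_apply, leibniz_lie, hz, zero_lie, zero_add, hu, lie_smul] }
  have hvE : v ∈ E := End.mem_eigenspace_iff.mpr hc
  have hE : E = ⊤ := (eq_bot_or_eq_top E).resolve_left fun hbot ↦ hv0 (by simpa [hbot] using hvE)
  exact ⟨c, fun u ↦ End.mem_eigenspace_iff.mp (show u ∈ E from hE ▸ LieSubmodule.mem_top u)⟩

end CentralElements

theorem exists_forall_le_of_forall_le_add_mul {f : ℤ → ℕ} {m : ℤ} (hm : m ≠ 0)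
    (hf : ∀ j n, f j ≤ f (j + m * n)) : ∃ d, ∀ j, f j ≤ d := by
  refine ⟨(Finset.range m.natAbs).sup fun r ↦ f r, fun j ↦ ?_⟩
  have hr := Int.emod_nonneg j hm
  have hlt : j % m < m.natAbs := m.natCast_natAbs ▸ Int.emod_lt_abs j hm
  calc f j ≤ f (j + m * -(j / m)) := hf _ _
    _ = f (j % m).toNat := by
      rw [Int.toNat_of_nonneg hr, Int.emod_def, mul_neg, sub_eq_add_neg]
    _ ≤ _ := Finset.le_sup (f := fun r : ℕ ↦ f r) (Finset.mem_range.mpr (by omega))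

section RootSl2Triples

open LieAlgebra

variable {K g : Type*} [Field K] [LieRing g] [LieAlgebra K g] {H : LieSubalgebra K g}
  {α : Dual K H} {h : H} {x y : g}

/-- An `sl₂`-triple `(h, x, y)` with `h ∈ H`, `x` in the root space of `α` and `y` in that of
`-α`. -/
structure IsRootSl2Triple (H : LieSubalgebra K g) (α : Dual K H) (h : H) (x y : g) : Prop where
  isSl2Triple : IsSl2Triple (h : g) x y
  lie_e : ∀ k : H, ⁅(k : g), x⁆ = α k • x
  lie_f : ∀ k : H, ⁅(k : g), y⁆ = (-α) k • y

namespace IsRootSl2Triple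

theorem symm (ht : IsRootSl2Triple H α h x y) : IsRootSl2Triple H (-α) (-h) y x where
  isSl2Triple := ht.isSl2Triple.symm
  lie_e := ht.lie_f
  lie_f := by simpa only [neg_neg] using ht.lie_e

theorem apply_h (ht : IsRootSl2Triple H α h x y) : α h = 2 :=
  smul_left_injective K ht.isSl2Triple.e_ne_zero <|
    (ht.lie_e h).symm.trans (ht.isSl2Triple.lie_h_e_smul K)

theorem exists_of_isKilling [CharZero K] [IsKilling K g] [FiniteDimensional K g] [Nontrivial g]
    (H : LieSubalgebra K g) [H.IsCartanSubalgebra] [LieModule.IsTriangularizable K H g] :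
    ∃ α h x y, IsRootSl2Triple H α h x y := by
  obtain ⟨α, hα⟩ : ∃ α : LieModule.Weight K H g, α.IsNonZero := by
    by_contra! hzero
    have hH : H.toLieSubmodule = ⊤ := by simpa [hzero] using cartan_sup_iSup_rootSpace_eq_top H
    have hmem (u : g) : u ∈ H := by
      simpa [hH] using LieSubalgebra.mem_toLieSubmodule (K := H) (x := u)
    have : IsLieAbelian g := ⟨fun u v ↦ congrArg Subtype.val
      (trivial_lie_zero H H ⟨u, hmem u⟩ ⟨v, hmem v⟩)⟩
    exact not_subsingleton g (subsingleton_of_hasTrivialRadical_lie_abelian K g)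
  obtain ⟨h, x, y, ht, hx, hy⟩ := IsKilling.exists_isSl2Triple_of_weight_isNonZero hα
  obtain rfl := ht.h_eq_coroot hα hx hy
  exact ⟨α.toLinear, IsKilling.coroot α, x, y, ht, IsKilling.lie_eq_smul_of_mem_rootSpace hx,
    IsKilling.lie_eq_smul_of_mem_rootSpace hy⟩

theorem form_h {B : g →ₗ[K] g →ₗ[K] K} (ht : IsRootSl2Triple H α h x y)
    (hB : ∀ u v w, B ⁅u, v⁆ w = B u ⁅v, w⁆) (k : H) : B h k = α k * B x y := by
  rw [← ht.isSl2Triple.lie_e_f, hB, ← lie_skew, ht.lie_f, LinearMap.neg_apply, neg_smul, neg_neg,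
    map_smul, smul_eq_mul]

end IsRootSl2Triple

variable [CharZero K] [IsKilling K g] [FiniteDimensional K g] [H.IsCartanSubalgebra]
  [LieModule.IsTriangularizable K H g] {B : g →ₗ[K] g →ₗ[K] K}

theorem form_eq_zero_of_mem_rootSpace (hB : ∀ u v w, B ⁅u, v⁆ w = B u ⁅v, w⁆)
    {χ : LieModule.Weight K H g} (hχ : χ.IsNonZero) (h : H) {z : g} (hz : z ∈ rootSpace H χ) :
    B h z = 0 := by
  obtain ⟨k, hk⟩ := Function.ne_iff.mp hχ
  have hkz : ⁅(k : g), z⁆ = χ k • z := IsKilling.lie_eq_smul_of_mem_rootSpace hz k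
  have hhk : ⁅(h : g), (k : g)⁆ = 0 := congrArg Subtype.val (trivial_lie_zero H H h k)
  refine (smul_eq_zero_iff_right hk).mp ?_
  rw [← map_smul, ← hkz, ← hB, hhk, map_zero, LinearMap.zero_apply]

theorem IsRootSl2Triple.form_h_h_ne_zero (ht : IsRootSl2Triple H α h x y)
    (hB : ∀ u v w, B ⁅u, v⁆ w = B u ⁅v, w⁆) (hsep : B.SeparatingLeft) : B h h ≠ 0 := by
  intro hhh
  have hxy : B x y = 0 := by simpa [ht.form_h hB, ht.apply_h] using hhh
  refine ht.isSl2Triple.h_ne_zero (hsep h fun z ↦ ?_)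
  have hle : H.toSubmodule ⊔ ⨆ χ : LieModule.Weight K H g, ⨆ (_ : χ.IsNonZero),
      (rootSpace H χ).toSubmodule ≤ LinearMap.ker (B h) :=
    sup_le (fun k hk ↦ by simpa [hxy] using ht.form_h hB ⟨k, hk⟩) <|
      iSup₂_le fun χ hχ z hz ↦ form_eq_zero_of_mem_rootSpace hB hχ h hz
  refine hle ?_
  have := congrArg LieSubmodule.toSubmodule (cartan_sup_iSup_rootSpace_eq_top H)
  simp only [LieSubmodule.sup_toSubmodule, LieSubmodule.iSup_toSubmodule,
    LieSubmodule.top_toSubmodule, LieSubalgebra.coe_toLieSubmodule] at this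
  rw [this]
  exact Submodule.mem_top

end RootSl2Triples

namespace LoopAffVir

open LieModule

variable {g A L : Type*} [LieRing g] [LieAlgebra ℂ g] [CommRing A] [Algebra ℂ A] [LieRing L]
  [LieAlgebra ℂ L] (S : LoopAffVir g A L)

theorem lie_E_zero_E (n : ℤ) (u x : g) (a b : A) :
    ⁅S.E 0 u a, S.E n x b⁆ = S.E n ⁅u, x⁆ (a * b) := by
  simp [S.lie_EE]

/-- The inclusion `eH` of `h̊` into `h̄` as a linear map. -/
def eHLinear : S.H →ₗ[ℂ] S.cartan where
  toFun := S.eH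
  map_add' _ _ := Subtype.ext (by simp [eH])
  map_smul' _ _ := Subtype.ext (by simp [eH])

variable (V : Type*) [AddCommGroup V] [Module ℂ V] [LieRingModule L V] [LieModule ℂ L V]

/-- The joint eigenspace of `h̊`, `d₀` and `C` with eigenvalues `p`, `μ` and `γ`. When `K ⊗ 1` acts
by zero these are the weight spaces, and the translate by `nδ` is obtained by changing `μ` to
`μ + n`. The weight `δ` itself need not exist as a functional on `h̄`, since the generators of `h̄`
are not required to be linearly independent in `L`. -/
def jointWtSpace (p : Dual ℂ S.H) (μ γ : ℂ) : Submodule ℂ V :=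
  (⨅ k : S.H, (toEnd ℂ L V (S.E 0 k 1)).eigenspace (p k)) ⊓
    (toEnd ℂ L V (S.D 0 1)).eigenspace μ ⊓ (toEnd ℂ L V (S.C 1)).eigenspace γ

variable {V} {p : Dual ℂ S.H} {μ γ : ℂ} {v : V}

theorem mem_jointWtSpace : v ∈ S.jointWtSpace V p μ γ ↔
    (∀ k : S.H, ⁅S.E 0 k 1, v⁆ = p k • v) ∧ ⁅S.D 0 1, v⁆ = μ • v ∧ ⁅S.C 1, v⁆ = γ • v := by
  simp only [jointWtSpace, Submodule.mem_inf, Submodule.mem_iInf, End.mem_eigenspace_iff,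
    toEnd_apply_apply, and_assoc]

theorem wtSpace_le_jointWtSpace (χ : Dual ℂ S.cartan) :
    S.wtSpace V χ ≤ S.jointWtSpace V (χ ∘ₗ S.eHLinear) (χ S.d0) (χ S.C1) :=
  fun _ hv ↦ S.mem_jointWtSpace.mpr ⟨fun k ↦ hv (S.eH k), hv S.d0, hv S.C1⟩

theorem exists_jointWtSpace_le_wtSpace (hK : ∀ v : V, ⁅S.K 1, v⁆ = 0)
    (hne : S.jointWtSpace V p μ γ ≠ ⊥) : ∃ χ, S.jointWtSpace V p μ γ ≤ S.wtSpace V χ := by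
  obtain ⟨v, hv, hv0⟩ := (Submodule.ne_bot_iff _).mp hne
  obtain ⟨φ, hφ⟩ := Module.Projective.exists_dual_eq_one ℂ hv0
  let act (w : V) : L →ₗ[ℂ] V := (toEnd ℂ L V : L →ₗ[ℂ] End ℂ V).flip w
  refine ⟨(φ ∘ₗ act v).domRestrict S.cartan, fun u hu z ↦ ?_⟩
  have hgen : Set.EqOn (act u) ((φ ∘ₗ act v).smulRight u) S.cartanSet := by
    obtain ⟨hpv, hμv, hγv⟩ := S.mem_jointWtSpace.mp hv
    obtain ⟨hpu, hμu, hγu⟩ := S.mem_jointWtSpace.mp hu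
    rintro _ (⟨k, hk, rfl⟩ | rfl | rfl | rfl)
    · have hku := hpu ⟨k, hk⟩
      have hkv := hpv ⟨k, hk⟩
      simp [act, hku, hkv, hφ]
    · simp [act, hK]
    · simp [act, hμu, hμv, hφ]
    · simp [act, hγu, hγv, hφ]
  exact LinearMap.eqOn_span hgen z.2

theorem finiteDimensional_jointWtSpace (hV : S.HasFinDimWeightSpaces V)
    (hK : ∀ v : V, ⁅S.K 1, v⁆ = 0) (p : Dual ℂ S.H) (μ γ : ℂ) :
    FiniteDimensional ℂ (S.jointWtSpace V p μ γ) := by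
  by_cases hbot : S.jointWtSpace V p μ γ = ⊥
  · rw [hbot]
    infer_instance
  · obtain ⟨χ, hχ⟩ := S.exists_jointWtSpace_le_wtSpace hK hbot
    have := hV χ
    exact Submodule.finiteDimensional_of_le hχ

theorem exists_jointWtSpace_ne_bot (hV : S.IsWeightModule V) {h : S.H}
    (hh : ∃ v : V, ⁅S.E 0 h 1, v⁆ ≠ 0) : ∃ p μ γ, p h ≠ 0 ∧ S.jointWtSpace V p μ γ ≠ ⊥ := by
  obtain ⟨v, hv⟩ := hh
  by_contra! hbot
  suffices hle : ⨆ χ, S.wtSpace V χ ≤ LinearMap.ker (toEnd ℂ L V (S.E 0 h 1)) from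
    hv (hle (hV ▸ Submodule.mem_top))
  refine iSup_le fun χ u hu ↦ LinearMap.mem_ker.mpr ?_
  have hχu : ⁅S.E 0 h 1, u⁆ = χ (S.eH h) • u := hu (S.eH h)
  obtain hχ | hχ := eq_or_ne (χ (S.eH h)) 0
  · rw [toEnd_apply_apply, hχu, hχ, zero_smul]
  · have hu' := S.wtSpace_le_jointWtSpace χ hu
    rw [hbot _ _ _ hχ, Submodule.mem_bot] at hu'
    rw [hu', map_zero]

variable {S}

theorem lie_mem_jointWtSpace {z : L} {β : Dual ℂ S.H} {ν : ℂ}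
    (hβ : ∀ k : S.H, ⁅S.E 0 k 1, z⁆ = β k • z) (hν : ⁅S.D 0 1, z⁆ = ν • z)
    (hv : v ∈ S.jointWtSpace V p μ γ) : ⁅z, v⁆ ∈ S.jointWtSpace V (p + β) (μ + ν) γ := by
  obtain ⟨hp, hμ, hγ⟩ := S.mem_jointWtSpace.mp hv
  refine S.mem_jointWtSpace.mpr ⟨fun k ↦ ?_, ?_, ?_⟩
  · rw [leibniz_lie, hβ, hp, smul_lie, lie_smul, ← add_smul, LinearMap.add_apply, add_comm]
  · rw [leibniz_lie, hν, hμ, smul_lie, lie_smul, ← add_smul, add_comm]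
  · rw [leibniz_lie, S.C_central, zero_lie, zero_add, hγ, lie_smul]

theorem lie_K_mem_jointWtSpace (a : A) (hv : v ∈ S.jointWtSpace V p μ γ) :
    ⁅S.K a, v⁆ ∈ S.jointWtSpace V p μ γ := by
  have hcentral (w : L) : ⁅w, S.K a⁆ = 0 := by rw [← lie_skew, S.K_central, neg_zero]
  simpa only [add_zero] using
    lie_mem_jointWtSpace (β := 0) (ν := 0) (fun k ↦ by simp [hcentral]) (by simp [hcentral]) hv

theorem lie_E_mem_jointWtSpace {β : Dual ℂ S.H} {x : g} (hx : ∀ k : S.H, ⁅(k : g), x⁆ = β k • x)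
    (n : ℤ) (a : A) (hv : v ∈ S.jointWtSpace V p μ γ) :
    ⁅S.E n x a, v⁆ ∈ S.jointWtSpace V (p + β) (μ + n) γ :=
  lie_mem_jointWtSpace
    (fun k ↦ by rw [lie_E_zero_E, hx, one_mul, map_smul, LinearMap.smul_apply])
    (by rw [S.lie_DE, one_mul, add_zero]) hv

theorem toEnd_E_pow_mem_jointWtSpace {β : Dual ℂ S.H} {x : g}
    (hx : ∀ k : S.H, ⁅(k : g), x⁆ = β k • x) (n : ℤ) (a : A) (hv : v ∈ S.jointWtSpace V p μ γ)
    (m : ℕ) : (toEnd ℂ L V (S.E n x a) ^ m) v ∈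
      S.jointWtSpace V (p + (m : ℂ) • β) (μ + (m * n : ℤ)) γ := by
  induction m with
  | zero => simpa using hv
  | succ m ih =>
    rw [pow_succ', End.mul_apply, toEnd_apply_apply]
    convert lie_E_mem_jointWtSpace hx n a ih using 2
    · push_cast
      module
    · push_cast
      ring

theorem exists_isSl2Triple_E {h x y : g} (ht : IsSl2Triple h x y) (hK : ∀ v : V, ⁅S.K 1, v⁆ = 0)
    (hh : ∃ v : V, ⁅S.E 0 h 1, v⁆ ≠ 0) {n m : ℤ} (hnm : n + m = 0) :
    ∃ z, IsSl2Triple z (S.E n x 1) (S.E m y 1) ∧ ∀ v : V, ⁅z, v⁆ = ⁅S.E 0 h 1, v⁆ := by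
  have hact (c : ℂ) (v : V) : ⁅S.E 0 h 1 + c • S.K 1, v⁆ = ⁅S.E 0 h 1, v⁆ := by
    rw [add_lie, smul_lie, hK, smul_zero, add_zero]
  refine ⟨S.E 0 h 1 + ((n : ℂ) * S.form x y) • S.K 1, ⟨fun h0 ↦ ?_, ?_, ?_, ?_⟩, hact _⟩
  · obtain ⟨v, hv⟩ := hh
    rw [← hact, h0, zero_lie] at hv
    exact hv rfl
  · rw [S.lie_EE, ht.lie_e_f, hnm, if_pos (by omega), one_mul]
  · rw [add_lie, smul_lie, S.K_central, smul_zero, add_zero, lie_E_zero_E, one_mul,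
      ht.lie_h_e_nsmul, map_nsmul, LinearMap.smul_apply]
  · rw [add_lie, smul_lie, S.K_central, smul_zero, add_zero, lie_E_zero_E, one_mul,
      ht.lie_h_f_nsmul, map_neg, map_nsmul, LinearMap.neg_apply, LinearMap.smul_apply]

section RootTranslations

variable {α : Dual ℂ S.H} {h : S.H} {x y : g}

theorem IsIntegrable.exists_toEnd_E_pow_eq_zero (hV : S.IsIntegrable V)
    (ht : IsRootSl2Triple S.H α h x y) (n : ℤ) (a : A) (v : V) :
    ∃ N, (toEnd ℂ L V (S.E n x a) ^ N) v = 0 := by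
  have hα : α ≠ 0 := by
    rintro rfl
    simpa using ht.apply_h
  have hx : x ∈ S.rootSp α := (S.rootSp_def α x).mpr ht.lie_e
  exact hV.2.2 α hα ((Submodule.ne_bot_iff _).mpr ⟨x, hx, ht.isSl2Triple.e_ne_zero⟩) x hx n a v

theorem IsIntegrable.exists_apply_eq_intCast (hV : S.IsIntegrable V)
    (ht : IsRootSl2Triple S.H α h x y) (hK : ∀ v : V, ⁅S.K 1, v⁆ = 0)
    (hne : S.jointWtSpace V p μ γ ≠ ⊥) : ∃ m : ℤ, p h = m := by
  obtain hp0 | hp0 := eq_or_ne (p h) 0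
  · exact ⟨0, by simpa using hp0⟩
  obtain ⟨v, hv, hv0⟩ := (Submodule.ne_bot_iff _).mp hne
  have hhv := (S.mem_jointWtSpace.mp hv).1 h
  obtain ⟨z, hz, hact⟩ := exists_isSl2Triple_E ht.isSl2Triple hK
    ⟨v, hhv ▸ smul_ne_zero hp0 hv0⟩ (add_zero 0)
  exact sl2_exists_weight_eq_intCast hz hv0 ((hact v).trans hhv)
    (hV.exists_toEnd_E_pow_eq_zero ht 0 1 v) (hV.exists_toEnd_E_pow_eq_zero ht.symm 0 1 v)

theorem IsIntegrable.toEnd_E_pow_apply_ne_zero (hV : S.IsIntegrable V)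
    (ht : IsRootSl2Triple S.H α h x y) (hK : ∀ v : V, ⁅S.K 1, v⁆ = 0) {m : ℕ} (hm : p h = m)
    (n : ℤ) (hv : v ∈ S.jointWtSpace V p μ γ) (hv0 : v ≠ 0) :
    (toEnd ℂ L V (S.E n y 1) ^ m) v ≠ 0 := by
  obtain rfl | hm0 := eq_or_ne m 0
  · simpa using hv0
  have hhv : ⁅S.E 0 h 1, v⁆ = (m : ℂ) • v := hm ▸ (S.mem_jointWtSpace.mp hv).1 h
  obtain ⟨z, hz, hact⟩ := exists_isSl2Triple_E ht.isSl2Triple hK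
    ⟨v, hhv ▸ smul_ne_zero (Nat.cast_ne_zero.mpr hm0) hv0⟩ (neg_add_cancel n)
  exact sl2_pow_toEnd_f_ne_zero hz hv0 ((hact v).trans hhv)
    (hV.exists_toEnd_E_pow_eq_zero ht (-n) 1 v)

/-- The operator `(x ⊗ tⁿ)ᵐ yᵐ` represents the translation by `mnδ` in the affine Weyl group, a
product of the reflections in `α` and `α + nδ`. -/
theorem IsIntegrable.finrank_jointWtSpace_le_add_natCast_mul (hV : S.IsIntegrable V)
    (ht : IsRootSl2Triple S.H α h x y) (hK : ∀ v : V, ⁅S.K 1, v⁆ = 0) {m : ℕ} (hm : p h = m)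
    (μ γ : ℂ) (n : ℤ) : finrank ℂ (S.jointWtSpace V p μ γ) ≤
      finrank ℂ (S.jointWtSpace V p (μ + (m * n : ℤ)) γ) := by
  let τ : End ℂ V := toEnd ℂ L V (S.E n x 1) ^ m * toEnd ℂ L V (S.E 0 y 1) ^ m
  have hy {v : V} (hv : v ∈ S.jointWtSpace V p μ γ) : (toEnd ℂ L V (S.E 0 y 1) ^ m) v ∈
      S.jointWtSpace V (p + (m : ℂ) • -α) μ γ := by
    simpa using toEnd_E_pow_mem_jointWtSpace ht.lie_f 0 1 hv m
  have hτ (v : V) (hv : v ∈ S.jointWtSpace V p μ γ) :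
      τ v ∈ S.jointWtSpace V p (μ + (m * n : ℤ)) γ := by
    have hxy := toEnd_E_pow_mem_jointWtSpace ht.lie_e n 1 (hy hv) m
    rwa [smul_neg, neg_add_cancel_right] at hxy
  have hreflect : (p + (m : ℂ) • -α) (-h) = m := by
    simp only [map_neg, LinearMap.add_apply, LinearMap.smul_apply, LinearMap.neg_apply, hm,
      ht.apply_h, smul_eq_mul]
    ring
  have := S.finiteDimensional_jointWtSpace hV.2.1 hK p (μ + (m * n : ℤ)) γ
  refine LinearMap.finrank_le_finrank_of_injective (f := τ.restrict hτ) ?_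
  refine (injective_iff_map_eq_zero _).mpr fun ⟨v, hv⟩ hτv ↦ Subtype.ext ?_
  by_contra hv0
  exact hV.toEnd_E_pow_apply_ne_zero ht.symm hK hreflect n (hy hv)
    (hV.toEnd_E_pow_apply_ne_zero ht hK hm 0 hv hv0) (congrArg Subtype.val hτv)

theorem IsIntegrable.finrank_jointWtSpace_le_add_mul (hV : S.IsIntegrable V)
    (ht : IsRootSl2Triple S.H α h x y) (hK : ∀ v : V, ⁅S.K 1, v⁆ = 0) {m : ℤ} (hm : p h = m)
    (μ γ : ℂ) (n : ℤ) : finrank ℂ (S.jointWtSpace V p μ γ) ≤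
      finrank ℂ (S.jointWtSpace V p (μ + (m * n : ℤ)) γ) := by
  obtain ⟨k, rfl | rfl⟩ := m.eq_nat_or_neg
  · exact hV.finrank_jointWtSpace_le_add_natCast_mul ht hK (by simpa using hm) μ γ n
  · have hmh : p (-h) = k := by simp [hm]
    rw [neg_mul, ← mul_neg]
    exact hV.finrank_jointWtSpace_le_add_natCast_mul ht.symm hK hmh μ γ (-n)

theorem IsIntegrable.exists_finrank_jointWtSpace_le (hV : S.IsIntegrable V)
    (ht : IsRootSl2Triple S.H α h x y) (hK : ∀ v : V, ⁅S.K 1, v⁆ = 0) (hp : p h ≠ 0)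
    (hne : S.jointWtSpace V p μ γ ≠ ⊥) :
    ∃ d, ∀ j : ℤ, finrank ℂ (S.jointWtSpace V p (μ + j) γ) ≤ d := by
  obtain ⟨m, hm⟩ := hV.exists_apply_eq_intCast ht hK hne
  have hm0 : m ≠ 0 := by
    rintro rfl
    exact hp (by simpa using hm)
  refine exists_forall_le_of_forall_le_add_mul hm0 fun j n ↦ ?_
  have hle := hV.finrank_jointWtSpace_le_add_mul ht hK hm (μ + j) γ n
  rwa [add_assoc, ← Int.cast_add] at hle

end RootTranslations

section HeisenbergOperators

theorem commute_toEnd_E {n m : ℤ} (hnm : n + m ≠ 0) (h : g) (a b : A) :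
    Commute (toEnd ℂ L V (S.E n h a)) (toEnd ℂ L V (S.E m h b)) := by
  ext v
  simp only [End.mul_apply, toEnd_apply_apply]
  rw [leibniz_lie, S.lie_EE, lie_self, if_neg (by omega)]
  simp

theorem isHeisenbergFamily_toEnd_E (h : g) {a : A} {c : ℂ} (hc : ∀ v : V, ⁅S.K a, v⁆ = c • v) :
    IsHeisenbergFamily (fun n : ℕ ↦ toEnd ℂ L V (S.E (n + 1 : ℕ) h 1))
      (fun n : ℕ ↦ toEnd ℂ L V (S.E (-(n + 1 : ℕ)) h a))
      (fun n : ℕ ↦ (n + 1 : ℕ) * S.form h h * c) where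
  commute_p _ _ := commute_toEnd_E (by omega) h 1 1
  commute_q _ _ := commute_toEnd_E (by omega) h a a
  commute_p_q _ _ _ := commute_toEnd_E (by omega) h 1 a
  mul_sub_mul n := by
    ext v
    simp only [LinearMap.sub_apply, End.mul_apply, toEnd_apply_apply, LinearMap.smul_apply,
      End.one_apply]
    rw [← lie_lie, S.lie_EE, lie_self, map_zero, LinearMap.zero_apply, zero_add, if_pos rfl,
      one_mul, smul_lie, hc, smul_smul, Int.cast_natCast]

theorem lie_K_eq_zero_of_lie_E_eq_zero {h x y : g} (ht : IsSl2Triple h x y)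
    (hhh : S.form h h ≠ 0) (hE : ∀ v : V, ⁅S.E 0 h 1, v⁆ = 0) (a : A) (v : V) :
    ⁅S.K a, v⁆ = 0 := by
  have hx (v : V) : ⁅S.E 0 x 1, v⁆ = 0 := by
    have h2 : (2 : ℂ) • S.E 0 x 1 = ⁅S.E 0 h 1, S.E 0 x 1⁆ := by
      rw [lie_E_zero_E, ht.lie_h_e_smul ℂ, one_mul, map_smul, LinearMap.smul_apply]
    refine (smul_eq_zero_iff_right (two_ne_zero (α := ℂ))).mp ?_
    rw [← smul_lie, h2, lie_lie, hE, hE, lie_zero, sub_zero]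
  have hh (n : ℤ) (b : A) (v : V) : ⁅S.E n h b, v⁆ = 0 := by
    rw [← ht.lie_e_f, ← one_mul b, ← lie_E_zero_E, lie_lie, hx, hx, lie_zero, sub_zero]
  have hK : S.form h h • S.K a = ⁅S.E 1 h 1, S.E (-1) h a⁆ := by simp [S.lie_EE]
  refine (smul_eq_zero_iff_right hhh).mp ?_
  rw [← smul_lie, hK, lie_lie, hh, hh, sub_zero]

/-- The finite-dimensional spaces of weight `λ + jδ` form a graded module over the Heisenberg
algebra spanned by `h ⊗ tⁿ`, `h ⊗ t⁻ⁿ ⊗ a` for `n > 0` and `K ⊗ a`. -/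
theorem eq_zero_of_forall_lie_K_eq_smul [IsLieAbelian S.H] (hV : S.HasFinDimWeightSpaces V)
    (hK : ∀ v : V, ⁅S.K 1, v⁆ = 0) {h : S.H} (hhh : S.form h h ≠ 0)
    (hne : S.jointWtSpace V p μ γ ≠ ⊥)
    (hd : ∃ d, ∀ j : ℤ, finrank ℂ (S.jointWtSpace V p (μ + j) γ) ≤ d)
    {a : A} {c : ℂ} (hc : ∀ v : V, ⁅S.K a, v⁆ = c • v) : c = 0 := by
  by_contra hc0
  obtain ⟨d, hd⟩ := hd
  have hhH (k : S.H) : ⁅(k : g), (h : g)⁆ = (0 : Dual ℂ S.H) k • (h : g) := by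
    rw [LinearMap.zero_apply, zero_smul]
    exact congrArg Subtype.val (trivial_lie_zero S.H S.H k h)
  have hshift (n : ℤ) (b : A) (j : ℤ) (v : V) (hv : v ∈ S.jointWtSpace V p (μ + j) γ) :
      toEnd ℂ L V (S.E n h b) v ∈ S.jointWtSpace V p (μ + (j + n : ℤ)) γ := by
    have hmem := lie_E_mem_jointWtSpace hhH n b hv
    rwa [add_zero, add_assoc, ← Int.cast_add] at hmem
  have (j : ℤ) := S.finiteDimensional_jointWtSpace hV hK p (μ + j) γ
  obtain ⟨j, hj⟩ := (isHeisenbergFamily_toEnd_E (h : g) hc).exists_lt_finrank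
    (U := fun j : ℤ ↦ S.jointWtSpace V p (μ + j) γ)
    (fun n ↦ mul_ne_zero (mul_ne_zero (Nat.cast_ne_zero.mpr n.succ_ne_zero) hhh) hc0)
    (by simpa using hne) (fun n ↦ hshift _ _) (fun n ↦ hshift _ _) d
  exact hj.not_ge (hd j)

end HeisenbergOperators

end LoopAffVir

theorem statement13_general
    {g A L : Type*} [LieRing g] [LieAlgebra ℂ g] [FiniteDimensional ℂ g]
    [LieAlgebra.IsSemisimple ℂ g] [Nontrivial g]
    [CommRing A] [Algebra ℂ A]
    [LieRing L] [LieAlgebra ℂ L]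
    (S : LoopAffVir g A L)
    (V : Type*) [AddCommGroup V] [Module ℂ V] [LieRingModule L V] [LieModule ℂ L V]
    (hIrr : IsSimpleOrder (LieSubmodule ℂ L V))
    (hInt : S.IsIntegrable V)
    (hK0 : ∀ v : V, ⁅S.K 1, v⁆ = 0) :
    ∀ (a : A) (v : V), ⁅S.K a, v⁆ = 0 := by
  have := S.isCartan
  obtain ⟨α, h, x, y, ht⟩ := IsRootSl2Triple.exists_of_isKilling S.H
  have hhh : S.form h h ≠ 0 := ht.form_h_h_ne_zero S.form_invariant S.form_nondeg
  by_cases hE : ∀ v : V, ⁅S.E 0 h 1, v⁆ = 0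
  · exact LoopAffVir.lie_K_eq_zero_of_lie_E_eq_zero ht.isSl2Triple hhh hE
  intro a v
  obtain ⟨p, μ, γ, hp, hne⟩ := S.exists_jointWtSpace_ne_bot hInt.1 (not_forall.mp hE)
  have := S.finiteDimensional_jointWtSpace hInt.2.1 hK0 p μ γ
  have hd := hInt.exists_finrank_jointWtSpace_le ht hK0 hp hne
  obtain ⟨c, hc⟩ := exists_forall_lie_eq_smul_of_central (S.K_central a) hne fun v hv ↦
    LoopAffVir.lie_K_mem_jointWtSpace a hv
  have hc0 : c = 0 := LoopAffVir.eq_zero_of_forall_lie_K_eq_smul hInt.2.1 hK0 hhh hne hd hc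
  rw [hc, hc0, zero_smul]

/-- Proposition `p1`.  Let `V` be an irreducible integrable
`𝔏(A)`-module with finite dimensional weight spaces on which `K ⊗ 1` acts trivially.
Then `(K ⊗ A) ⬝ V = 0`. -/
theorem statement13
    {g A L : Type*} [LieRing g] [LieAlgebra ℂ g] [FiniteDimensional ℂ g]
    [LieAlgebra.IsSimple ℂ g]
    [CommRing A] [Algebra ℂ A] [Algebra.FiniteType ℂ A]
    [LieRing L] [LieAlgebra ℂ L]
    (S : LoopAffVir g A L)
    (V : Type*) [AddCommGroup V] [Module ℂ V] [LieRingModule L V] [LieModule ℂ L V]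
    (hIrr : IsSimpleOrder (LieSubmodule ℂ L V))
    (hInt : S.IsIntegrable V)
    (hK0 : ∀ v : V, ⁅S.K 1, v⁆ = 0)
    :
    ∀ (a : A) (v : V), ⁅S.K a, v⁆ = 0 := by
  have := LieAlgebra.IsSimple.nontrivial ℂ g
  exact statement13_general S V hIrr hInt hK0
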